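/- Let b ≥ 2 be an integer and E a nonempty set of base-b digits. Then K(b,E) = (b/#E)·log(b) + (1/b)·∫_{[0,1)} Σ_{a∈E1} (ψ((a+x)/b) − ψ(1)) dμ_{b,E}(x). -/

import Mathlib

open MeasureTheory Real ENNReal

/-- The digamma function `ψ(x) = d/dx log Γ(x)`. -/
noncomputable def digamma (x : ℝ) : ℝ := deriv (fun y => Real.log (Real.Gamma y)) x

/-- The Kempner sum `K(b,E)`: sum of reciprocals of positive integers whose
base-`b` digits all avoid the excluded set `E`. -/
noncomputable def kempnerSum (b : ℕ) (E : Finset ℕ) : ℝ :=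
  ∑' n : ℕ, if n ≠ 0 ∧ ∀ d ∈ Nat.digits b n, d ∉ E then (n : ℝ)⁻¹ else 0

/-- The measure `μ_{b,E}` on `[0,1)`: the sum, over all finite strings of admissible
digits (digits `< b` not in `E`), of the weighted Dirac mass `b^{-l} δ_{n(X)/b^l}`. -/
noncomputable def kempnerMeasure (b : ℕ) (E : Finset ℕ) : Measure ℝ :=
  Measure.sum (fun X : {l : List ℕ // ∀ d ∈ l, d < b ∧ d ∉ E} =>
    ((b : ℝ≥0∞) ^ X.1.length)⁻¹ •
      Measure.dirac (((Nat.ofDigits b X.1 : ℕ) : ℝ) / (b : ℝ) ^ X.1.length))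

/-- `E₁ = E` if `0 ∉ E`, and `E₁ = (E ∪ {b}) \ {0}` if `0 ∈ E`. -/
def Eone (b : ℕ) (E : Finset ℕ) : Finset ℕ :=
  if 0 ∈ E then insert b (E.erase 0) else E

/-!
Let `A` be the set of admissible digits. Splitting off the leading digit of a nonempty string shows
that `μ = δ₀ + b⁻¹ ∑_{a ∈ A} (x ↦ (a + x) / b)_* μ`, so that
`∫ (b f(x) - ∑_{a ∈ A} f((a + x) / b)) dμ = b f(0)`; the same splitting for integers gives
`K(b, E) = ∫ ∑_{a ∈ A, a ≠ 0} 1 / (a + x) dμ`.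

The substitution `0 ↦ b` carries `E` to `E₁` and the set of all digits to `{1, …, b}`. Gauss's
multiplication theorem for `ψ` evaluates the sum of `ψ((a + x) / b)` over `{1, …, b}`, and
`ψ(y + 1) = ψ(y) + 1 / y` moves the terms of `A` into the shape required by self-similarity:
`∑_{a ∈ E₁} ψ((a + x) / b) = b ψ(1 + x) - b log b - ∑_{a ∈ A} ψ(1 + (a + x) / b)
  + b ∑_{a ∈ A, a ≠ 0} 1 / (a + x)`.
With `f(x) = ψ(1 + x)`, integration yields `b ψ(1) - b log b · μ([0,1)) + b K(b, E)`, and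
`μ([0,1)) = b / #E` makes the constants `ψ(1)` cancel.
-/

open Filter Finset Topology

section Digamma

lemma differentiableAt_log_Gamma {x : ℝ} (hx : 0 < x) :
    DifferentiableAt ℝ (fun y => Real.log (Gamma y)) x :=
  (differentiableOn_Gamma_Ioi.differentiableAt (Ioi_mem_nhds hx)).log (Gamma_pos_of_pos hx).ne'

lemma log_Gamma_add_one {x : ℝ} (hx : 0 < x) :
    Real.log (Gamma (x + 1)) = Real.log x + Real.log (Gamma x) := by
  rw [Gamma_add_one hx.ne', log_mul hx.ne' (Gamma_pos_of_pos hx).ne']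

lemma digamma_add_one {x : ℝ} (hx : 0 < x) : digamma (x + 1) = digamma x + 1 / x := by
  have log_Gamma_shift : (fun y => Real.log (Gamma (y + 1))) =ᶠ[𝓝 x]
      fun y => Real.log y + Real.log (Gamma y) := by
    filter_upwards [lt_mem_nhds hx] with y hy using log_Gamma_add_one hy
  rw [digamma, ← deriv_comp_add_const (fun y => Real.log (Gamma y)), log_Gamma_shift.deriv_eq,
    deriv_fun_add (differentiableAt_log hx.ne') (differentiableAt_log_Gamma hx), deriv_log,
    one_div, add_comm, digamma]

lemma digamma_add_natCast {x : ℝ} (hx : 0 < x) (n : ℕ) :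
    digamma (x + n) = digamma x + ∑ k ∈ range n, 1 / (x + k) := by
  induction n with
  | zero => simp
  | succ n ih =>
    rw [sum_range_succ, ← add_assoc, ← ih, Nat.cast_succ, ← add_assoc,
      digamma_add_one (by positivity)]

lemma monotoneOn_digamma : MonotoneOn digamma (Set.Ioi 0) :=
  convexOn_log_Gamma.monotoneOn_deriv fun _ hx => differentiableAt_log_Gamma hx

lemma measurable_digamma : Measurable digamma := measurable_deriv _

lemma slope_log_Gamma_add_one {x : ℝ} (hx : 0 < x) :
    slope (fun y => Real.log (Gamma y)) x (x + 1) = Real.log x := by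
  simp [slope_def_field, log_Gamma_add_one hx]

lemma digamma_le_log {x : ℝ} (hx : 0 < x) : digamma x ≤ Real.log x := by
  rw [← slope_log_Gamma_add_one hx]
  exact convexOn_log_Gamma.deriv_le_slope hx (hx.trans (lt_add_one x)) (lt_add_one x)
    (differentiableAt_log_Gamma hx)

lemma log_le_digamma_add_one {x : ℝ} (hx : 0 < x) : Real.log x ≤ digamma (x + 1) := by
  rw [← slope_log_Gamma_add_one hx]
  have hx' : 0 < x + 1 := hx.trans (lt_add_one x)
  exact convexOn_log_Gamma.slope_le_deriv hx hx' (lt_add_one x) (differentiableAt_log_Gamma hx')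

lemma tendsto_digamma_sub_log : Tendsto (fun x => digamma x - Real.log x) atTop (𝓝 0) := by
  have neg_inv_tendsto : Tendsto (fun x : ℝ => -(1 / x)) atTop (𝓝 0) := by
    simpa using (tendsto_inv_atTop_zero (𝕜 := ℝ)).neg
  refine tendsto_of_tendsto_of_tendsto_of_le_of_le' neg_inv_tendsto tendsto_const_nhds ?_ ?_
  · filter_upwards [eventually_gt_atTop 0] with x hx
    linarith [log_le_digamma_add_one hx, digamma_add_one hx]
  · filter_upwards [eventually_gt_atTop 0] with x hx
    linarith [digamma_le_log hx]

lemma tendsto_log_sub_sum_digamma {x : ℝ} (hx : 0 < x) :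
    Tendsto (fun n : ℕ => Real.log n - ∑ k ∈ range n, 1 / (x + k)) atTop (𝓝 (digamma x)) := by
  have shifted_digamma : Tendsto (fun n : ℕ => digamma (x + n) - Real.log (x + n)) atTop (𝓝 0) :=
    tendsto_digamma_sub_log.comp (tendsto_atTop_add_const_left _ _ tendsto_natCast_atTop_atTop)
  have shifted_log : Tendsto (fun n : ℕ => Real.log (n + x) - Real.log n) atTop (𝓝 0) :=
    (tendsto_log_comp_add_sub_log x).comp tendsto_natCast_atTop_atTop
  have shifted_limit := ((shifted_digamma.add shifted_log).neg).const_add (digamma x)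
  simp only [add_zero, neg_zero] at shifted_limit
  refine shifted_limit.congr fun n => ?_
  rw [digamma_add_natCast hx, add_comm (n : ℝ)]
  ring

lemma sum_range_sum_range_add_mul {M : Type*} [AddCommMonoid M] (f : ℕ → M) (b n : ℕ) :
    ∑ a ∈ range b, ∑ k ∈ range n, f (a + b * k) = ∑ j ∈ range (b * n), f j := by
  rw [sum_comm]
  induction n with
  | zero => simp
  | succ n ih =>
    rw [sum_range_succ, ih, Nat.mul_succ, sum_range_add]
    simp only [add_comm]

lemma sum_digamma_add_div {b : ℕ} (hb : 0 < b) {x : ℝ} (hx : 0 < x) :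
    ∑ a ∈ range b, digamma ((a + x) / b) = b * digamma x - b * Real.log b := by
  have hb' : (0 : ℝ) < b := Nat.cast_pos.2 hb
  have limit_of_terms := tendsto_finsetSum (range b) fun a _ =>
    tendsto_log_sub_sum_digamma (x := (a + x) / b) (by positivity)
  have limit_of_blocks : Tendsto
      (fun n : ℕ => b * (Real.log (b * n : ℕ) - ∑ j ∈ range (b * n), 1 / (x + j)) - b * Real.log b)
      atTop (𝓝 (b * digamma x - b * Real.log b)) :=
    (((tendsto_log_sub_sum_digamma hx).comp
      (tendsto_id.const_mul_atTop' hb)).const_mul _).sub_const _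
  refine tendsto_nhds_unique limit_of_terms (limit_of_blocks.congr' ?_)
  filter_upwards [eventually_gt_atTop 0] with n hn
  have term_eq (a k : ℕ) : 1 / ((a + x) / b + k) = b * (1 / (x + (a + b * k : ℕ))) := by
    push_cast
    field_simp
    ring
  simp only [term_eq, sum_sub_distrib, ← mul_sum]
  rw [sum_range_sum_range_add_mul fun j => 1 / (x + (j : ℝ)), sum_const, card_range, nsmul_eq_mul,
    Nat.cast_mul, log_mul hb'.ne' (by positivity)]
  ring

lemma integrable_digamma_comp {Ω : Type*} [MeasurableSpace Ω] {μ : Measure Ω} [IsFiniteMeasure μ]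
    {f : Ω → ℝ} (hf : Measurable f) {c C : ℝ} (hc : 0 < c) (hfC : ∀ᵐ x ∂μ, f x ∈ Set.Icc c C) :
    Integrable (fun x => digamma (f x)) μ := by
  refine Integrable.of_mem_Icc (digamma c) (digamma C) (measurable_digamma.comp hf).aemeasurable ?_
  filter_upwards [hfC] with x hx
  have hfx : 0 < f x := hc.trans_le hx.1
  exact ⟨monotoneOn_digamma hc hfx hx.1, monotoneOn_digamma hfx (hfx.trans_le hx.2) hx.2⟩

end Digamma

section DigitStrings

/-- Splitting off the last entry: a list with entries in `p` is either empty or a shorter such list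
followed by an element of `p`. -/
noncomputable def listForallConcatEquiv {α : Type*} (p : α → Prop) :
    Unit ⊕ {a // p a} × {l : List α // ∀ a ∈ l, p a} ≃ {l : List α // ∀ a ∈ l, p a} :=
  Equiv.ofBijective
    (Sum.elim (fun _ => ⟨[], by simp⟩) fun q =>
      ⟨q.2.1 ++ [q.1.1], by simpa [or_imp, forall_and] using ⟨q.2.2, q.1.2⟩⟩) <| by
    constructor
    · rintro (_ | ⟨a, l⟩) (_ | ⟨a', l'⟩) h <;> simp_all [Subtype.ext_iff, Prod.ext_iff]
    · rintro ⟨l, hl⟩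
      rcases List.eq_nil_or_concat l with rfl | ⟨m, a, rfl⟩
      · exact ⟨Sum.inl (), rfl⟩
      · exact ⟨Sum.inr (⟨a, hl a (by simp)⟩, ⟨m, fun d hd => hl d (by simp [hd])⟩), by simp⟩

lemma tsum_list_forall {α : Type*} {p : α → Prop} {s : Finset α} (hs : ∀ a, a ∈ s ↔ p a)
    (F : List α → ℝ≥0∞) :
    ∑' l : {l : List α // ∀ a ∈ l, p a}, F l =
      F [] + ∑ a ∈ s, ∑' l : {l : List α // ∀ a ∈ l, p a}, F (l ++ [a]) := by
  obtain rfl : p = (· ∈ s) := funext fun a => propext (hs a).symm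
  rw [← (listForallConcatEquiv (· ∈ s)).tsum_eq,
    Summable.tsum_sum ENNReal.summable ENNReal.summable, tsum_fintype, Fintype.sum_unique,
    ← Finset.tsum_subtype, ← ENNReal.tsum_prod]
  rfl

lemma tsum_pow_length_list_forall {α : Type*} {p : α → Prop} {s : Finset α}
    (hs : ∀ a, a ∈ s ↔ p a) (c : ℝ≥0∞) :
    ∑' l : {l : List α // ∀ a ∈ l, p a}, c ^ l.1.length = (1 - #s * c)⁻¹ := by
  have sum_of_length (n : ℕ) :
      ∑' l : {l : List α // ∀ a ∈ l, p a}, (if l.1.length = n then c ^ n else 0) =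
        (#s * c) ^ n := by
    induction n with
    | zero =>
      rw [tsum_list_forall hs fun l => if l.length = 0 then c ^ 0 else 0]
      simp
    | succ n ih =>
      have concat_term (l : List α) (a : α) :
          (if (l ++ [a]).length = n + 1 then c ^ (n + 1) else 0) =
            (if l.length = n then c ^ n else 0) * c := by
        simp [pow_succ]
      rw [tsum_list_forall hs fun l => if l.length = n + 1 then c ^ (n + 1) else 0]
      simp only [concat_term, ENNReal.tsum_mul_right, ih, sum_const, nsmul_eq_mul]
      simp [pow_succ, mul_left_comm]
  rw [← ENNReal.tsum_geometric, ← tsum_congr sum_of_length, ENNReal.tsum_comm]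
  simp

/-- The digits admitted in base `b`, i.e. the set written `A` in the literature. -/
def admissibleDigits (b : ℕ) (E : Finset ℕ) : Finset ℕ := range b \ E

/-- Finite strings of admissible digits, least significant digit first as in `Nat.digits`. -/
abbrev AdmissibleString (b : ℕ) (E : Finset ℕ) : Type :=
  {l : List ℕ // ∀ d ∈ l, d < b ∧ d ∉ E}

/-- The number `0.d_l…d_1` in base `b` with digit string `[d_1, …, d_l]`. -/
noncomputable def digitFraction (b : ℕ) (l : List ℕ) : ℝ :=
  (Nat.ofDigits b l : ℕ) / (b : ℝ) ^ l.length

variable {b : ℕ} {E : Finset ℕ}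

lemma mem_admissibleDigits {a : ℕ} : a ∈ admissibleDigits b E ↔ a < b ∧ a ∉ E := by
  simp [admissibleDigits]

lemma card_admissibleDigits (hE : ∀ d ∈ E, d < b) : #(admissibleDigits b E) = b - #E := by
  rw [admissibleDigits, card_sdiff_of_subset fun d hd => mem_range.2 (hE d hd), card_range]

lemma digitFraction_concat (hb : 0 < b) (l : List ℕ) (a : ℕ) :
    digitFraction b (l ++ [a]) = (a + digitFraction b l) / b := by
  have : (0 : ℝ) < b := Nat.cast_pos.2 hb
  simp only [digitFraction, Nat.ofDigits_append, Nat.ofDigits_singleton, List.length_append,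
    List.length_singleton, pow_succ]
  push_cast
  field_simp
  ring

lemma inv_ofDigits_concat (hb : 0 < b) (l : List ℕ) (a : ℕ) :
    ((Nat.ofDigits b (l ++ [a]) : ℕ) : ℝ)⁻¹ =
      ((b : ℝ) ^ l.length)⁻¹ * (1 / (a + digitFraction b l)) := by
  have : (0 : ℝ) < b := Nat.cast_pos.2 hb
  rw [one_div, ← mul_inv, digitFraction, Nat.ofDigits_append, Nat.ofDigits_singleton]
  push_cast
  field_simp
  ring

lemma digitFraction_mem_Ico (hb : 1 < b) {l : List ℕ} (hl : ∀ d ∈ l, d < b) :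
    digitFraction b l ∈ Set.Ico (0 : ℝ) 1 := by
  refine ⟨by unfold digitFraction; positivity, ?_⟩
  rw [digitFraction, div_lt_one (by positivity)]
  exact_mod_cast Nat.ofDigits_lt_base_pow_length hb hl

end DigitStrings

section KempnerMeasure

variable {b : ℕ} {E : Finset ℕ}

lemma ae_kempnerMeasure_mem_Ico (hb : 1 < b) :
    ∀ᵐ x ∂kempnerMeasure b E, x ∈ Set.Ico (0 : ℝ) 1 := by
  refine (Measure.ae_sum_iff' measurableSet_Ico).2 fun X => Measure.ae_smul_measure ?_ _
  exact (ae_dirac_iff measurableSet_Ico).2 (digitFraction_mem_Ico hb fun d hd => (X.2 d hd).1)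

lemma kempnerMeasure_restrict_Ico (hb : 1 < b) :
    (kempnerMeasure b E).restrict (Set.Ico 0 1) = kempnerMeasure b E :=
  Measure.restrict_eq_self_of_ae_mem (ae_kempnerMeasure_mem_Ico hb)

lemma kempnerMeasure_apply {s : Set ℝ} (hs : MeasurableSet s) :
    kempnerMeasure b E s = ∑' X : AdmissibleString b E,
      ((b : ℝ≥0∞) ^ X.1.length)⁻¹ * s.indicator 1 (digitFraction b X) := by
  simp [kempnerMeasure, digitFraction, Measure.sum_apply _ hs, Measure.dirac_apply' _ hs]

lemma kempnerMeasure_univ (hb : 0 < b) (hE : ∀ d ∈ E, d < b) :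
    kempnerMeasure b E Set.univ = b / #E := by
  have hb' : (b : ℝ≥0∞) ≠ 0 := by exact_mod_cast hb.ne'
  have hEb : #E ≤ b := by
    simpa using card_le_card fun d hd => mem_range.2 (hE d hd)
  rw [kempnerMeasure_apply MeasurableSet.univ]
  simp only [Set.indicator_univ, Pi.one_apply, mul_one, ENNReal.inv_pow]
  rw [tsum_pow_length_list_forall (fun _ => mem_admissibleDigits), card_admissibleDigits hE]
  nth_rw 1 [← ENNReal.mul_inv_cancel hb' (by simp)]
  rw [← ENNReal.sub_mul (by simp [hb.ne']), ← ENNReal.natCast_sub, Nat.sub_sub_self hEb,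
    ← div_eq_mul_inv, ENNReal.inv_div (by simp) (by simp [hb.ne'])]

lemma isFiniteMeasure_kempnerMeasure (hb : 0 < b) (hE : E.Nonempty) (hEb : ∀ d ∈ E, d < b) :
    IsFiniteMeasure (kempnerMeasure b E) where
  measure_univ_lt_top := by
    rw [kempnerMeasure_univ hb hEb]
    exact ENNReal.div_lt_top (by simp) (by simpa using hE.ne_empty)

lemma kempnerMeasure_eq_dirac_add_sum_map (hb : 0 < b) :
    kempnerMeasure b E = Measure.dirac 0 + (b : ℝ≥0∞)⁻¹ • ∑ a ∈ admissibleDigits b E,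
      (kempnerMeasure b E).map fun x : ℝ => (a + x) / b := by
  ext s hs
  rw [kempnerMeasure_apply hs, tsum_list_forall (fun _ => mem_admissibleDigits) fun l =>
    ((b : ℝ≥0∞) ^ l.length)⁻¹ * s.indicator 1 (digitFraction b l)]
  simp only [Measure.add_apply, Measure.smul_apply, Measure.finsetSum_apply, smul_eq_mul, mul_sum,
    Measure.dirac_apply' _ hs]
  congr 1
  · simp [digitFraction]
  · refine sum_congr rfl fun a _ => ?_
    have contraction_measurable : Measurable fun x : ℝ => (a + x) / b := by fun_prop
    rw [Measure.map_apply contraction_measurable hs,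
      kempnerMeasure_apply (contraction_measurable hs), ← ENNReal.tsum_mul_left]
    refine tsum_congr fun X => ?_
    rw [digitFraction_concat hb, List.length_append, List.length_singleton, pow_succ', ← mul_assoc,
      ENNReal.mul_inv (by simp) (by simp)]
    rfl

lemma integrable_map_contraction (hb : 0 < b) {f : ℝ → ℝ}
    (hf : Integrable f (kempnerMeasure b E)) {a : ℕ} (ha : a ∈ admissibleDigits b E) :
    Integrable f ((kempnerMeasure b E).map fun x : ℝ => (a + x) / b) := by
  rw [kempnerMeasure_eq_dirac_add_sum_map hb] at hf
  exact integrable_finsetSum_measure.1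
    ((integrable_smul_measure (by simp) (by simp [hb.ne'])).1 hf.right_of_add_measure) a ha

lemma integrable_comp_contraction (hb : 0 < b) {f : ℝ → ℝ} (hf : Integrable f (kempnerMeasure b E))
    {a : ℕ} (ha : a ∈ admissibleDigits b E) :
    Integrable (fun x => f ((a + x) / b)) (kempnerMeasure b E) :=
  (integrable_map_contraction hb hf ha).comp_measurable (by fun_prop)

lemma integral_kempnerMeasure_eq (hb : 0 < b) {f : ℝ → ℝ}
    (hf : Integrable f (kempnerMeasure b E)) :
    ∫ x, f x ∂kempnerMeasure b E =
      f 0 + (b : ℝ)⁻¹ * ∑ a ∈ admissibleDigits b E, ∫ x, f ((a + x) / b) ∂kempnerMeasure b E := by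
  have f_map (a : ℕ) (ha : a ∈ admissibleDigits b E) := integrable_map_contraction hb hf ha
  conv_lhs => rw [kempnerMeasure_eq_dirac_add_sum_map hb]
  rw [integral_add_measure (integrable_dirac (by simp))
      ((integrable_finsetSum_measure.2 f_map).smul_measure (by simp [hb.ne'])),
    integral_dirac, integral_smul_measure, integral_finsetSum_measure f_map, ENNReal.toReal_inv,
    ENNReal.toReal_natCast, smul_eq_mul]
  congr 2
  exact sum_congr rfl fun a ha =>
    integral_map (by fun_prop) (f_map a ha).aestronglyMeasurable

lemma integrable_mul_sub_sum_contraction (hb : 0 < b) {f : ℝ → ℝ}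
    (hf : Integrable f (kempnerMeasure b E)) :
    Integrable (fun x => b * f x - ∑ a ∈ admissibleDigits b E, f ((a + x) / b))
      (kempnerMeasure b E) :=
  (hf.const_mul _).sub <| integrable_finsetSum _ fun _ => integrable_comp_contraction hb hf

lemma integral_mul_sub_sum_contraction (hb : 0 < b) {f : ℝ → ℝ}
    (hf : Integrable f (kempnerMeasure b E)) :
    ∫ x, (b * f x - ∑ a ∈ admissibleDigits b E, f ((a + x) / b)) ∂kempnerMeasure b E = b * f 0 := by
  have contraction_integrable (a : ℕ) (ha : a ∈ admissibleDigits b E) :=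
    integrable_comp_contraction hb hf ha
  have hb' : (b : ℝ) ≠ 0 := Nat.cast_ne_zero.2 hb.ne'
  rw [integral_sub (hf.const_mul _) (integrable_finsetSum _ contraction_integrable),
    integral_const_mul, integral_finsetSum _ contraction_integrable,
    integral_kempnerMeasure_eq hb hf, mul_add, mul_inv_cancel_left₀ hb', add_sub_cancel_right]

lemma hasSum_integral_kempnerMeasure {f : ℝ → ℝ} (hf : Integrable f (kempnerMeasure b E)) :
    HasSum (fun X : AdmissibleString b E => ((b : ℝ) ^ X.1.length)⁻¹ * f (digitFraction b X))
      (∫ x, f x ∂kempnerMeasure b E) := by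
  simpa using! hasSum_integral_measure hf

end KempnerMeasure

section KempnerSum

variable {b : ℕ} {E : Finset ℕ}

lemma digits_ofDigits_concat (hb : 1 < b) (X : AdmissibleString b E)
    {a : ℕ} (ha : a ∈ (admissibleDigits b E).erase 0) :
    Nat.digits b (Nat.ofDigits b (X.1 ++ [a])) = X.1 ++ [a] := by
  obtain ⟨ha0, ha⟩ := mem_erase.1 ha
  refine Nat.digits_ofDigits b hb _ (fun d hd => ?_) (by simpa using ha0)
  rcases List.mem_append.1 hd with hd | hd
  · exact (X.2 d hd).1
  · rw [List.mem_singleton.1 hd]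
    exact (mem_admissibleDigits.1 ha).1

lemma exists_ofDigits_concat_eq (hb : 1 < b) {n : ℕ} (hn : n ≠ 0)
    (hE : ∀ d ∈ Nat.digits b n, d ∉ E) :
    ∃ a ∈ (admissibleDigits b E).erase 0, ∃ X : AdmissibleString b E,
      Nat.ofDigits b (X.1 ++ [a]) = n := by
  have digits_admissible (d : ℕ) (hd : d ∈ Nat.digits b n) : d < b ∧ d ∉ E :=
    ⟨Nat.digits_lt_base hb hd, hE d hd⟩
  have digits_ne_nil : Nat.digits b n ≠ [] := Nat.digits_ne_nil_iff_ne_zero.2 hn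
  refine ⟨(Nat.digits b n).getLast digits_ne_nil,
    mem_erase.2 ⟨Nat.getLast_digit_ne_zero b hn, mem_admissibleDigits.2 <|
      digits_admissible _ (List.getLast_mem digits_ne_nil)⟩,
    ⟨(Nat.digits b n).dropLast, fun d hd => digits_admissible d (List.mem_of_mem_dropLast hd)⟩, ?_⟩
  rw [List.dropLast_append_getLast, Nat.ofDigits_digits]

lemma kempnerSum_eq_tsum_concat (hb : 1 < b) :
    kempnerSum b E = ∑' q : (admissibleDigits b E).erase 0 × AdmissibleString b E,
      ((Nat.ofDigits b (q.2.1 ++ [q.1.1]) : ℕ) : ℝ)⁻¹ := by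
  have digits_eq (q : (admissibleDigits b E).erase 0 × AdmissibleString b E) :=
    digits_ofDigits_concat hb q.2 q.1.2
  have value_injective : Function.Injective
      fun q : (admissibleDigits b E).erase 0 × AdmissibleString b E =>
        Nat.ofDigits b (q.2.1 ++ [q.1.1]) := by
    intro q r hqr
    have concat_eq := congrArg (Nat.digits b) hqr
    simp only [digits_eq] at concat_eq
    obtain ⟨string_eq, digit_eq⟩ := List.append_inj' concat_eq rfl
    exact Prod.ext (Subtype.ext (List.singleton_inj.1 digit_eq)) (Subtype.ext string_eq)
  rw [kempnerSum, ← value_injective.tsum_eq]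
  · refine tsum_congr fun q => if_pos ⟨fun value_zero => ?_, fun d hd => ?_⟩
    · simpa [value_zero] using digits_eq q
    · rw [digits_eq, List.mem_append, List.mem_singleton] at hd
      rcases hd with hd | rfl
      · exact (q.2.2 d hd).2
      · exact (mem_admissibleDigits.1 (mem_of_mem_erase q.1.2)).2
  · intro n hn
    obtain ⟨hn0, hnE⟩ := (ite_ne_right_iff.1 hn).1
    obtain ⟨a, ha, X, rfl⟩ := exists_ofDigits_concat_eq hb hn0 hnE
    exact ⟨(⟨a, ha⟩, X), rfl⟩

lemma integrable_one_div_natCast_add [IsFiniteMeasure (kempnerMeasure b E)] (hb : 1 < b)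
    {a : ℕ} (ha : a ≠ 0) : Integrable (fun x : ℝ => 1 / (a + x)) (kempnerMeasure b E) := by
  refine Integrable.of_mem_Icc 0 1 (by fun_prop) ?_
  filter_upwards [ae_kempnerMeasure_mem_Ico hb] with x hx
  have one_le : 1 ≤ (a : ℝ) + x :=
    (Nat.one_le_cast.2 (Nat.one_le_iff_ne_zero.2 ha)).trans (le_add_of_nonneg_right hx.1)
  exact ⟨by positivity, (div_le_one (by positivity)).2 one_le⟩

lemma integrable_sum_one_div_natCast_add [IsFiniteMeasure (kempnerMeasure b E)] (hb : 1 < b) :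
    Integrable (fun x : ℝ => ∑ a ∈ (admissibleDigits b E).erase 0, 1 / (a + x))
      (kempnerMeasure b E) :=
  integrable_finsetSum _ fun _ ha => integrable_one_div_natCast_add hb (ne_of_mem_erase ha)

lemma kempnerSum_eq_integral [IsFiniteMeasure (kempnerMeasure b E)] (hb : 1 < b) :
    kempnerSum b E =
      ∫ x, ∑ a ∈ (admissibleDigits b E).erase 0, 1 / (a + x) ∂kempnerMeasure b E := by
  have hasSum_leading (a : (admissibleDigits b E).erase 0) :
      HasSum (fun X : AdmissibleString b E => ((Nat.ofDigits b (X.1 ++ [a.1]) : ℕ) : ℝ)⁻¹)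
        (∫ x, 1 / (a + x) ∂kempnerMeasure b E) := by
    simp only [inv_ofDigits_concat (zero_lt_one.trans hb)]
    exact hasSum_integral_kempnerMeasure
      (integrable_one_div_natCast_add hb (ne_of_mem_erase a.2))
  have summable_concat : Summable fun q : (admissibleDigits b E).erase 0 × AdmissibleString b E =>
      ((Nat.ofDigits b (q.2.1 ++ [q.1.1]) : ℕ) : ℝ)⁻¹ :=
    (summable_prod_of_nonneg fun _ => by positivity).2
      ⟨fun a => (hasSum_leading a).summable, .of_finite⟩
  rw [kempnerSum_eq_tsum_concat hb, summable_concat.tsum_prod,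
    integral_finsetSum _ fun a ha => integrable_one_div_natCast_add hb (ne_of_mem_erase ha),
    ← Finset.tsum_subtype]
  exact tsum_congr fun a => (hasSum_leading a).tsum_eq

end KempnerSum

section ExcludedDigits

variable {b : ℕ} {E : Finset ℕ}

lemma sum_Eone {M : Type*} [AddCommMonoid M] (hE : b ∉ E) (f : ℕ → M) :
    ∑ a ∈ Eone b E, f a = ∑ a ∈ E, f (if a = 0 then b else a) := by
  have sum_of_ne_zero {s : Finset ℕ} (hs : 0 ∉ s) :
      ∑ a ∈ s, f (if a = 0 then b else a) = ∑ a ∈ s, f a :=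
    sum_congr rfl fun a ha => by rw [if_neg (ne_of_mem_of_not_mem ha hs)]
  unfold Eone
  split_ifs with h0
  · rw [sum_insert fun hb => hE (mem_of_mem_erase hb), ← add_sum_erase E _ h0,
      sum_of_ne_zero (notMem_erase 0 E), if_pos rfl]
  · exact (sum_of_ne_zero h0).symm

lemma card_Eone (hE : b ∉ E) : #(Eone b E) = #E := by
  simpa only [card_eq_sum_ones] using sum_Eone hE fun _ => 1

lemma sum_range_ite_zero {M : Type*} [AddCommMonoid M] (hb : 0 < b) (f : ℕ → M) :
    ∑ a ∈ range b, f (if a = 0 then b else a) = ∑ a ∈ range b, f (a + 1) := by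
  obtain ⟨c, rfl⟩ := Nat.exists_eq_add_one.2 hb
  rw [sum_range_succ', sum_range_succ]
  simp

lemma digamma_ite_add_div (hb : 0 < b) (a : ℕ) {x : ℝ} (hx : 0 ≤ x) :
    digamma (((if a = 0 then b else a : ℕ) + x) / b) =
      digamma (1 + (a + x) / b) - b * (if a = 0 then 0 else 1 / (a + x)) := by
  have hb' : (0 : ℝ) < b := Nat.cast_pos.2 hb
  split_ifs with ha
  · rw [ha, Nat.cast_zero, zero_add, mul_zero, sub_zero, add_div, div_self hb'.ne']
  · have : (0 : ℝ) < a := Nat.cast_pos.2 (Nat.pos_of_ne_zero ha)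
    rw [add_comm 1, digamma_add_one (by positivity), one_div_div, mul_one_div, add_sub_cancel_right]

lemma sum_Eone_digamma (hb : 0 < b) (hE : ∀ d ∈ E, d < b) {x : ℝ} (hx : 0 ≤ x) :
    ∑ a ∈ Eone b E, digamma ((a + x) / b) =
      b * digamma (1 + x) - b * Real.log b
        - ∑ a ∈ admissibleDigits b E, digamma (1 + (a + x) / b)
        + b * ∑ a ∈ (admissibleDigits b E).erase 0, 1 / (a + x) := by
  have all_digits : ∑ a ∈ range b, digamma (((if a = 0 then b else a : ℕ) + x) / b) =
      b * digamma (1 + x) - b * Real.log b := by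
    rw [sum_range_ite_zero hb fun a => digamma ((a + x) / b),
      ← sum_digamma_add_div hb (by positivity : 0 < 1 + x)]
    simp only [Nat.cast_add_one, add_assoc]
  have admissible_digits :
      ∑ a ∈ admissibleDigits b E, digamma (((if a = 0 then b else a : ℕ) + x) / b) =
        ∑ a ∈ admissibleDigits b E, digamma (1 + (a + x) / b)
          - b * ∑ a ∈ (admissibleDigits b E).erase 0, 1 / (a + x) := by
    have erase_eq : ∑ a ∈ (admissibleDigits b E).erase 0, 1 / (a + x) =
        ∑ a ∈ admissibleDigits b E, if a = 0 then 0 else 1 / (a + x) := by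
      rw [← sum_erase (admissibleDigits b E)
        (f := fun a : ℕ => if a = 0 then 0 else 1 / ((a : ℝ) + x)) (if_pos rfl)]
      exact sum_congr rfl fun a ha => (if_neg (ne_of_mem_erase ha)).symm
    simp only [digamma_ite_add_div hb _ hx, sum_sub_distrib, erase_eq, mul_sum]
  rw [sum_Eone (fun h => (hE b h).false) fun a => digamma ((a + x) / b)]
  have split_digits := sum_sdiff (f := fun a => digamma (((if a = 0 then b else a : ℕ) + x) / b))
    fun d hd => mem_range.2 (hE d hd)
  rw [← admissibleDigits] at split_digits
  linarith

end ExcludedDigits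

section Formula

variable {b : ℕ} {E : Finset ℕ} [IsFiniteMeasure (kempnerMeasure b E)]

lemma integrable_digamma_one_add (hb : 1 < b) :
    Integrable (fun x => digamma (1 + x)) (kempnerMeasure b E) := by
  refine integrable_digamma_comp (c := 1) (C := 2) (by fun_prop) one_pos ?_
  filter_upwards [ae_kempnerMeasure_mem_Ico hb] with x hx
  constructor <;> linarith [hx.1, hx.2]

lemma integral_sum_Eone_digamma_sub (hb : 1 < b) (hE : ∀ d ∈ E, d < b) :
    ∫ x, ∑ a ∈ Eone b E, (digamma ((a + x) / b) - digamma 1) ∂kempnerMeasure b E =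
      b * digamma 1 + b * kempnerSum b E
        - (kempnerMeasure b E).real Set.univ * (b * Real.log b + #E * digamma 1) := by
  have hb0 : 0 < b := zero_lt_one.trans hb
  have integrand_ae_eq :
      (fun x => ∑ a ∈ Eone b E, (digamma ((a + x) / b) - digamma 1)) =ᵐ[kempnerMeasure b E]
        fun x => b * digamma (1 + x) - ∑ a ∈ admissibleDigits b E, digamma (1 + (a + x) / b)
          + b * ∑ a ∈ (admissibleDigits b E).erase 0, 1 / (a + x)
          - (b * Real.log b + #E * digamma 1) := by
    filter_upwards [ae_kempnerMeasure_mem_Ico hb] with x hx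
    rw [sum_sub_distrib, sum_Eone_digamma hb0 hE hx.1, sum_const, nsmul_eq_mul,
      card_Eone fun h => (hE b h).false]
    ring
  have digamma_integrable := integrable_digamma_one_add (E := E) hb
  have difference_integrable := integrable_mul_sub_sum_contraction hb0 digamma_integrable
  have reciprocal_integrable :=
    (integrable_sum_one_div_natCast_add (E := E) hb).const_mul (b : ℝ)
  rw [integral_congr_ae integrand_ae_eq,
    integral_sub (difference_integrable.fun_add reciprocal_integrable) (integrable_const _),
    integral_add difference_integrable reciprocal_integrable,
    integral_mul_sub_sum_contraction hb0 digamma_integrable, integral_const_mul,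
    ← kempnerSum_eq_integral hb, integral_const, smul_eq_mul, add_zero]

end Formula

theorem kempner_digamma_formula (b : ℕ) (hb : 2 ≤ b) (E : Finset ℕ)
    (hE : E.Nonempty) (hEsub : ∀ d ∈ E, d < b) :
    kempnerSum b E = ((b : ℝ) / E.card) * Real.log b +
      (1 / (b : ℝ)) * ∫ x in Set.Ico (0 : ℝ) 1,
        (∑ a ∈ Eone b E, (digamma (((a : ℝ) + x) / b) - digamma 1))
          ∂(kempnerMeasure b E) := by
  have hb0 : 0 < b := by omega
  have hb' : (b : ℝ) ≠ 0 := Nat.cast_ne_zero.2 hb0.ne'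
  have hE' : (#E : ℝ) ≠ 0 := Nat.cast_ne_zero.2 hE.card_ne_zero
  have := isFiniteMeasure_kempnerMeasure hb0 hE hEsub
  have total_mass : (kempnerMeasure b E).real Set.univ = b / #E := by
    simp [Measure.real, kempnerMeasure_univ hb0 hEsub]
  rw [kempnerMeasure_restrict_Ico hb, integral_sum_Eone_digamma_sub hb hEsub, total_mass]
  field_simp
  ring
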